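/- Let σ be a substitution, X a variable and t a term such that Xσ = tσ. Then for every term u, (u{X/t})σ = uσ, where {X/t} denotes the substitution mapping X to t and every other variable to itself. Consequently, σ is a solution of an equation set E if and only if σ is a solution of E{X/t} (the set obtained by applying {X/t} to both sides of every equation of E). -/

import Mathlib

/-- Finite first-order terms: variables and function applications.
A function symbol is identified by its name together with the number of
arguments it is applied to (fixed arity). -/
inductive Trm : Type where
  | var : ℕ → Trm
  | fn  : ℕ → List Trm → Trm

namespace Trm

/-- `|t|`: the number of occurrences of variables and function symbols
(including constants) in the term `t`. -/
def size : Trm → ℕ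
  | .var _ => 1
  | .fn _ ts => 1 + (ts.attach.map (fun ⟨t, _⟩ => size t)).sum
decreasing_by
  have := List.sizeOf_lt_of_mem ‹_ ∈ ts›
  simp [Trm.fn.sizeOf_spec]; omega

/-- Application of a substitution (a map from variables to terms) to a term. -/
def subst (σ : ℕ → Trm) : Trm → Trm
  | .var x => σ x
  | .fn f ts => .fn f (ts.attach.map (fun ⟨t, _⟩ => subst σ t))
decreasing_by
  have := List.sizeOf_lt_of_mem ‹_ ∈ ts›
  simp [Trm.fn.sizeOf_spec]; omega

/-- The number of occurrences of the variable `x` in a term. -/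
def count (x : ℕ) : Trm → ℕ
  | .var y => if y = x then 1 else 0
  | .fn _ ts => (ts.attach.map (fun ⟨t, _⟩ => count x t)).sum
decreasing_by
  have := List.sizeOf_lt_of_mem ‹_ ∈ ts›
  simp [Trm.fn.sizeOf_spec]; omega

/-- `Occurs x t` : the variable `x` occurs in the term `t`. -/
inductive Occurs (x : ℕ) : Trm → Prop where
  | var : Occurs x (.var x)
  | fn {f : ℕ} {ts : List Trm} {t : Trm} : t ∈ ts → Occurs x t → Occurs x (.fn f ts)

end Trm

/-- The set of variables occurring in a term. -/
def varSet (t : Trm) : Set ℕ := {x | Trm.Occurs x t}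

/-- The set of variables occurring in a list (tuple) of terms. -/
def varsL (l : List Trm) : Set ℕ := {x | ∃ t ∈ l, Trm.Occurs x t}

/-- The number of occurrences of a variable in a list (tuple) of terms. -/
def countL (x : ℕ) (l : List Trm) : ℕ := (l.map (Trm.count x)).sum

/-- A term is ground if no variable occurs in it. -/
def Ground (t : Trm) : Prop := ∀ x, ¬ Trm.Occurs x t

/-- An equation set: a set of equations `s ≐ t` between terms,
represented as pairs of terms. -/
abbrev EqSet := Set (Trm × Trm)

/-- `σ` is a solution (unifier) of the equation set `E`. -/
def Solves (σ : ℕ → Trm) (E : EqSet) : Prop :=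
  ∀ e ∈ E, Trm.subst σ e.1 = Trm.subst σ e.2

/-- `E` is unifiable: it has a unifier. -/
def Unifiable (E : EqSet) : Prop := ∃ σ, Solves σ E

/-- `θ` is a most general unifier of `E`. -/
def IsMgu (θ : ℕ → Trm) (E : EqSet) : Prop :=
  Solves θ E ∧ ∀ σ, Solves σ E → ∃ ρ, ∀ x, σ x = Trm.subst ρ (θ x)

/-- The equation set `s ≐̈ t` pairing corresponding members of two
equal-length tuples of terms. -/
def zipEqs (s t : List Trm) : EqSet := {e | e ∈ s.zip t}

/-- The substitution `{X/t}` mapping `X` to `t` and every other variable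
to itself. -/
def single (X : ℕ) (t : Trm) : ℕ → Trm :=
  fun y => if y = X then t else .var y

/-- The equation set `E{X/t}`: the substitution applied to both sides of
every equation of `E`. -/
def substE (θ : ℕ → Trm) (E : EqSet) : EqSet :=
  (fun e => (Trm.subst θ e.1, Trm.subst θ e.2)) '' E

namespace Trm

theorem subst_var (σ : ℕ → Trm) (x : ℕ) : subst σ (.var x) = σ x := by
  rw [subst]

theorem subst_fn (σ : ℕ → Trm) (f : ℕ) (ts : List Trm) :
    subst σ (.fn f ts) = .fn f (ts.map (subst σ)) := by
  rw [subst, List.attach_map_val]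

theorem subst_subst (σ τ : ℕ → Trm) (u : Trm) :
    subst σ (subst τ u) = subst (subst σ ∘ τ) u := by
  induction u using subst.induct with
  | case1 x => simp only [subst_var, Function.comp_apply]
  | case2 f ts ih =>
    simp only [subst_fn, List.map_map]
    exact congrArg (fn f) (List.map_congr_left ih)

theorem subst_comp_single {σ : ℕ → Trm} {X : ℕ} {t : Trm} (h : σ X = subst σ t) :
    subst σ ∘ single X t = σ := by
  funext y
  by_cases hy : y = X
  · subst hy
    simp only [Function.comp_apply, single, if_true, h]
  · simp only [Function.comp_apply, single, if_neg hy, subst_var]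

end Trm

theorem solves_substE_iff (σ θ : ℕ → Trm) (E : EqSet) :
    Solves σ (substE θ E) ↔ Solves (Trm.subst σ ∘ θ) E := by
  simp only [Solves, substE, Set.forall_mem_image, Trm.subst_subst]

/-- Let `σ` be a substitution, `X` a variable and `t` a term such that `Xσ = tσ`.
Then for every term `u`, `(u{X/t})σ = uσ`.  Consequently, `σ` is a solution of
an equation set `E` if and only if `σ` is a solution of `E{X/t}`. -/
theorem stmt4 (σ : ℕ → Trm) (X : ℕ) (t : Trm)
    (h : σ X = Trm.subst σ t) :
    (∀ u : Trm, Trm.subst σ (Trm.subst (single X t) u) = Trm.subst σ u) ∧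
    (∀ E : EqSet, Solves σ E ↔ Solves σ (substE (single X t) E)) := by
  have absorb : Trm.subst σ ∘ single X t = σ := Trm.subst_comp_single h
  constructor
  · intro u
    rw [Trm.subst_subst, absorb]
  · intro E
    rw [solves_substE_iff, absorb]
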